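/- If x : ℝ → L²(P,H) is square-mean almost automorphic, then its range {x(t) : t ∈ ℝ} is relatively compact in L²(P,H), i.e., the closure of {x(t) : t ∈ ℝ} is compact. -/

import Mathlib

open MeasureTheory Filter Set Topology

noncomputable section

section Defs

variable {E : Type*} [NormedAddCommGroup E]

/-- Stochastic continuity: `E‖x(t) − x(s)‖² → 0` as `t → s` (norms taken in `L²(P,H)`). -/
def StochCont (x : ℝ → E) : Prop :=
  ∀ s : ℝ, Tendsto (fun t => ‖x t - x s‖ ^ 2) (𝓝 s) (𝓝 0)

/-- Stochastic boundedness: `sup_t E‖x(t)‖² < ∞`. -/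
def StochBdd (x : ℝ → E) : Prop := ∃ M : ℝ, ∀ t : ℝ, ‖x t‖ ^ 2 ≤ M

/-- Square-mean almost automorphy (SAA). -/
def SAA (x : ℝ → E) : Prop :=
  StochCont x ∧
  ∀ s' : ℕ → ℝ, ∃ φ : ℕ → ℕ, StrictMono φ ∧ ∃ y : ℝ → E,
    (∀ t : ℝ, Tendsto (fun n => ‖x (t + s' (φ n)) - y t‖ ^ 2) atTop (𝓝 0)) ∧
    (∀ t : ℝ, Tendsto (fun n => ‖y (t - s' (φ n)) - x t‖ ^ 2) atTop (𝓝 0))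

/-- `μ(T,ρ) = ∫_{−T}^{T} ρ(t) dt`. -/
def muW (ρ : ℝ → ℝ) (T : ℝ) : ℝ := ∫ t in (-T)..T, ρ t

/-- `ρ ∈ 𝓤_∞`: positive, locally integrable, `μ(T,ρ) → ∞`. -/
def UInfty (ρ : ℝ → ℝ) : Prop :=
  (∀ t, 0 < ρ t) ∧ MeasureTheory.LocallyIntegrable ρ ∧ Tendsto (muW ρ) atTop atTop

/-- The ergodic-zero class `SPAA₀(ρ)`. Note `(E‖x(t)‖²)^{1/2} = ‖x t‖` in `L²(P,H)`. -/
def SPAA0 (ρ : ℝ → ℝ) (x : ℝ → E) : Prop :=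
  StochCont x ∧ StochBdd x ∧
  Tendsto (fun T => (muW ρ T)⁻¹ * ∫ t in (-T)..T, ‖x t‖ * ρ t) atTop (𝓝 0)

/-- `ρ ∈ 𝓤^inv`: `ρ ∈ 𝓤_∞` and `SPAA₀(ρ)` (for `F`-valued processes) is translation invariant. -/
def UInvSp (F : Type*) [NormedAddCommGroup F] (ρ : ℝ → ℝ) : Prop :=
  UInfty ρ ∧ ∀ x : ℝ → F, SPAA0 ρ x → ∀ τ : ℝ, SPAA0 ρ fun t => x (t + τ)

/-- Square-mean weighted pseudo almost automorphy `WPAA(ρ)`. -/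
def WPAA (ρ : ℝ → ℝ) (f : ℝ → E) : Prop :=
  ∃ g h : ℝ → E, SAA g ∧ SPAA0 ρ h ∧ ∀ t, f t = g t + h t

/-- `L²_loc`: square integrability (of the second moment) on compact sets. -/
def L2loc (x : ℝ → E) : Prop :=
  ∀ K : Set ℝ, IsCompact K → IntegrableOn (fun s => ‖x s‖ ^ 2) K

/-- `S²`-almost automorphy (`AS²`). -/
def AS2 (x : ℝ → E) : Prop :=
  L2loc x ∧
  ∀ s' : ℕ → ℝ, ∃ φ : ℕ → ℕ, StrictMono φ ∧ ∃ y : ℝ → E, L2loc y ∧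
    (∀ t : ℝ, Tendsto (fun n => ∫ s in t..(t + 1), ‖x (s + s' (φ n)) - y s‖ ^ 2) atTop (𝓝 0)) ∧
    (∀ t : ℝ, Tendsto (fun n => ∫ s in t..(t + 1), ‖y (s - s' (φ n)) - x s‖ ^ 2) atTop (𝓝 0))

/-- `BS²`: Stepanov boundedness. -/
def BS2 (x : ℝ → E) : Prop :=
  L2loc x ∧ ∃ M : ℝ, ∀ t : ℝ, (∫ s in t..(t + 1), ‖x s‖ ^ 2) ≤ M

/-- `h^b ∈ SPAA₀^{S²}(ρ)`. -/
def SPAA0S2 (ρ : ℝ → ℝ) (h : ℝ → E) : Prop :=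
  Tendsto (fun T => (muW ρ T)⁻¹ *
    ∫ t in (-T)..T, Real.sqrt (∫ s in t..(t + 1), ‖h s‖ ^ 2) * ρ t) atTop (𝓝 0)

/-- `S²`-weighted pseudo almost automorphy `WPAAS²(ρ)`. -/
def WPAAS2 (ρ : ℝ → ℝ) (f : ℝ → E) : Prop :=
  BS2 f ∧ ∃ g h : ℝ → E, AS2 g ∧ SPAA0S2 ρ h ∧ ∀ t, f t = g t + h t

/-- `ρ₁ ∼ ρ₂`: the quotient `ρ₁/ρ₂` is bounded with positive infimum. -/
def equivW (ρ₁ ρ₂ : ℝ → ℝ) : Prop :=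
  (∃ C : ℝ, ∀ t, ρ₁ t / ρ₂ t ≤ C) ∧ (∃ c > 0, ∀ t, c ≤ ρ₁ t / ρ₂ t)

/-- `ρ ∈ 𝓤_T`: `ρ ∈ 𝓤_∞` and `ρ ∼ ρ(· + s)` for every `s`. -/
def UT (ρ : ℝ → ℝ) : Prop :=
  UInfty ρ ∧ ∀ s : ℝ, equivW ρ fun t => ρ (t + s)

/-- `f(·,x) ∈ L²_loc` for each `x`. -/
def L2locF (f : ℝ → E → E) : Prop := ∀ x : E, L2loc fun t => f t x

/-- Two-variable `S²`-almost automorphy `AS²(ℝ×L²(P,H))`. -/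
def AS2F (f : ℝ → E → E) : Prop :=
  L2locF f ∧
  ∀ s' : ℕ → ℝ, ∃ φ : ℕ → ℕ, StrictMono φ ∧ ∃ g : ℝ → E → E, L2locF g ∧
    (∀ t : ℝ, ∀ x : E,
      Tendsto (fun n => ∫ s in t..(t + 1), ‖f (s + s' (φ n)) x - g s x‖ ^ 2) atTop (𝓝 0)) ∧
    (∀ t : ℝ, ∀ x : E,
      Tendsto (fun n => ∫ s in t..(t + 1), ‖g (s - s' (φ n)) x - f s x‖ ^ 2) atTop (𝓝 0))

/-- Uniform stochastic continuity on bounded subsets, uniformly in `t`. -/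
def UnifStochCont (f : ℝ → E → E) : Prop :=
  ∀ K' : Set E, Bornology.IsBounded K' → ∀ ε > 0, ∃ δ > 0,
    ∀ x ∈ K', ∀ y ∈ K', ‖x - y‖ ^ 2 < δ → ∀ t : ℝ, ‖f t x - f t y‖ ^ 2 < ε

/-- `h^b ∈ SPAA₀^{S²}(ℝ×L²(P,H),ρ)`. -/
def SPAA0S2F (ρ : ℝ → ℝ) (h : ℝ → E → E) : Prop :=
  ∀ x : E, SPAA0S2 ρ fun t => h t x

end Defs

variable {Ω : Type*} [MeasurableSpace Ω] {P : Measure Ω} [IsProbabilityMeasure P]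
variable {H : Type*} [NormedAddCommGroup H] [InnerProductSpace ℝ H] [CompleteSpace H]
  [SecondCountableTopology H]

/-!
Evaluating the forward limit at `t = 0` shows that every sequence in the range has a convergent
subsequence. A sequence in the closure of the range is approximated by one in the range up to a
null sequence of distances, so the closure is sequentially compact, hence compact.
-/

section RelativeCompactness

variable {X : Type*}

theorem exists_seq_mem_tendsto_dist_of_mem_closure [PseudoMetricSpace X] {A : Set X} {u : ℕ → X}
    (hu : ∀ n, u n ∈ closure A) :
    ∃ v : ℕ → X, (∀ n, v n ∈ A) ∧ Tendsto (fun n => dist (v n) (u n)) atTop (𝓝 0) := by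
  choose v hvA hv using fun n : ℕ =>
    Metric.mem_closure_iff.1 (hu n) (1 / ((n : ℝ) + 1)) Nat.one_div_pos_of_nat
  refine ⟨v, hvA, squeeze_zero (fun _ => dist_nonneg) (fun n => ?_)
    tendsto_one_div_add_atTop_nhds_zero_nat⟩
  rw [dist_comm]
  exact (hv n).le

variable [TopologicalSpace X] [TopologicalSpace.PseudoMetrizableSpace X]

theorem isCompact_closure_of_forall_exists_subseq_tendsto {A : Set X}
    (hA : ∀ u : ℕ → X, (∀ n, u n ∈ A) →
      ∃ a, ∃ φ : ℕ → ℕ, StrictMono φ ∧ Tendsto (u ∘ φ) atTop (𝓝 a)) :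
    IsCompact (closure A) := by
  let := TopologicalSpace.pseudoMetrizableSpacePseudoMetric X
  refine IsSeqCompact.isCompact fun u hu => ?_
  obtain ⟨v, hvA, hvu⟩ := exists_seq_mem_tendsto_dist_of_mem_closure hu
  obtain ⟨a, φ, hφ, hva⟩ := hA v hvA
  have hua : Tendsto (u ∘ φ) atTop (𝓝 a) := hva.congr_dist (hvu.comp hφ.tendsto_atTop)
  have ha : a ∈ closure A :=
    isClosed_closure.mem_of_tendsto hua (Eventually.of_forall fun n => hu (φ n))
  exact ⟨a, ha, φ, hφ, hua⟩

theorem isCompact_closure_range_of_forall_exists_subseq_tendsto {ι : Type*} {x : ι → X}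
    (hx : ∀ s : ℕ → ι, ∃ a, ∃ φ : ℕ → ℕ, StrictMono φ ∧ Tendsto (x ∘ s ∘ φ) atTop (𝓝 a)) :
    IsCompact (closure (range x)) := by
  refine isCompact_closure_of_forall_exists_subseq_tendsto fun u hu => ?_
  choose s hs using hu
  obtain rfl : x ∘ s = u := funext hs
  exact hx s

end RelativeCompactness

theorem tendsto_norm_sub_sq_zero_iff {ι E : Type*} [SeminormedAddCommGroup E] {l : Filter ι}
    {f : ι → E} {a : E} :
    Tendsto (fun i => ‖f i - a‖ ^ 2) l (𝓝 0) ↔ Tendsto f l (𝓝 a) := by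
  rw [tendsto_iff_norm_sub_tendsto_zero (f := f)]
  refine ⟨fun h => ?_, fun h => ?_⟩
  · simpa only [Real.sqrt_sq (norm_nonneg _), Real.sqrt_zero] using h.sqrt
  · simpa only [zero_pow two_ne_zero] using h.pow 2

theorem SAA_range_relatively_compact_general {T E : Type*} [AddZeroClass T]
    [SeminormedAddCommGroup E] {x : T → E}
    (hx : ∀ s : ℕ → T, ∃ φ : ℕ → ℕ, StrictMono φ ∧ ∃ y : T → E,
      ∀ t, Tendsto (fun n => ‖x (t + s (φ n)) - y t‖ ^ 2) atTop (𝓝 0)) :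
    IsCompact (closure (range x)) := by
  refine isCompact_closure_range_of_forall_exists_subseq_tendsto fun s => ?_
  obtain ⟨φ, hφ, y, hy⟩ := hx s
  have hy_zero : Tendsto (fun n => x (0 + s (φ n))) atTop (𝓝 (y 0)) :=
    tendsto_norm_sub_sq_zero_iff.1 (hy 0)
  simp only [zero_add] at hy_zero
  exact ⟨y 0, φ, hφ, hy_zero⟩

/-- The range of a square-mean almost automorphic process is relatively
compact in `L²(P,H)`. -/
theorem SAA_range_relatively_compact
    (x : ℝ → Lp H 2 P) (hx : SAA x) :
    IsCompact (closure (Set.range x)) := by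
  refine SAA_range_relatively_compact_general fun s => ?_
  obtain ⟨φ, hφ, y, hy, -⟩ := hx.2 s
  exact ⟨φ, hφ, y, hy⟩
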